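/- Let A be a dehyperplane arrangement in an n-simanifold T, and X an element of L_A. Then the restriction A^X := {P ∩ X : P ∈ A, X ⊄ P, P ∩ X ≠ ∅} is a dehyperplane arrangement in the simanifold X. -/

import Mathlib

open Set

noncomputable section

/-- The ambient Euclidean space `ℝ^N`. -/
abbrev Euc (N : ℕ) := EuclideanSpace ℝ (Fin N)

/-- An `i`-simanifold: a nonempty (open, i.e. boundaryless) contractible topological
`i`-manifold, realized as a subset of the ambient space. -/
def IsSimanifold {N : ℕ} (i : ℕ) (S : Set (Euc N)) : Prop :=
  S.Nonempty ∧ ContractibleSpace S ∧ Nonempty (ChartedSpace (EuclideanSpace ℝ (Fin i)) S)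

/-- A dehyperplane in an `n`-simanifold `T`: an `(n-1)`-simanifold `P ⊆ T` cutting `T`
into two `n`-simanifolds `plus` and `minus`, with `plus ⊔ P ⊔ minus = T` and
`closure plus ∩ closure minus = P`. -/
structure Dehyperplane (N n : ℕ) (T : Set (Euc N)) where
  P : Set (Euc N)
  plus : Set (Euc N)
  minus : Set (Euc N)
  simP : IsSimanifold (n - 1) P
  simPlus : IsSimanifold n plus
  simMinus : IsSimanifold n minus
  union_eq : plus ∪ P ∪ minus = T
  disj_pP : Disjoint plus P
  disj_pm : Disjoint plus minus
  disj_Pm : Disjoint P minus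
  closure_eq : closure plus ∩ closure minus = P

/-- `L_A`: the set of nonempty intersections of elements of `A` (empty intersection `T`),
the flats of `A`. (Ordered by reverse inclusion: `X ≤ Y ↔ Y ⊆ X`.) -/
def flats {N n : ℕ} {T : Set (Euc N)} (A : Set (Dehyperplane N n T)) : Set (Set (Euc N)) :=
  {X | X.Nonempty ∧ ∃ B ⊆ A, X = T ∩ ⋂ P ∈ B, P.P}

/-- A dehyperplane arrangement (DA) in the `n`-simanifold `T`. -/
def IsDA {N : ℕ} (n : ℕ) (T : Set (Euc N)) (A : Set (Dehyperplane N n T)) : Prop :=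
  A.Finite ∧ ∀ P ∈ A, ∀ X ∈ flats A, (P.P ∩ X).Nonempty →
    X ⊆ P.P ∨ ∃ i, 1 ≤ i ∧ i ≤ n ∧ IsSimanifold (i - 1) (P.P ∩ X) ∧
      IsSimanifold i (P.plus ∩ X) ∧ IsSimanifold i (P.minus ∩ X)

/-- `P^ε` for a sign `ε ∈ {+,0,-}`. -/
def Dehyperplane.part {N n : ℕ} {T : Set (Euc N)} (P : Dehyperplane N n T) :
    SignType → Set (Euc N)
  | .pos => P.plus
  | .zero => P.P
  | .neg => P.minus

/-- A face of `A`: a nonempty set of the form `⋂_{P ∈ A} P^{ε_P}`. -/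
def IsFace {N n : ℕ} {T : Set (Euc N)} (A : Set (Dehyperplane N n T))
    (F : Set (Euc N)) : Prop :=
  F.Nonempty ∧ ∃ ε : Dehyperplane N n T → SignType, F = T ∩ ⋂ P ∈ A, P.part (ε P)

/-- A chamber of `A`: a face with `ε_P ≠ 0` for all `P ∈ A`. -/
def IsChamber {N n : ℕ} {T : Set (Euc N)} (A : Set (Dehyperplane N n T))
    (F : Set (Euc N)) : Prop :=
  F.Nonempty ∧ ∃ ε : Dehyperplane N n T → SignType,
    (∀ P ∈ A, ε P ≠ 0) ∧ F = T ∩ ⋂ P ∈ A, P.part (ε P)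

/-- The restriction `A^X = {P ∩ X | P ∈ A, X ⊄ P, P ∩ X ≠ ∅}`, as dehyperplanes in `X`
(viewed as an `m`-simanifold), with halves `P^± ∩ X`. -/
def restrict {N n : ℕ} {T : Set (Euc N)} (A : Set (Dehyperplane N n T)) (m : ℕ)
    (X : Set (Euc N)) : Set (Dehyperplane N m X) :=
  {Q | ∃ P ∈ A, ¬ X ⊆ P.P ∧ (P.P ∩ X).Nonempty ∧
    Q.P = P.P ∩ X ∧ Q.plus = P.plus ∩ X ∧ Q.minus = P.minus ∩ X}

/-- The dimension of a subset of `ℝ^N`: the largest `i` such that `S` contains an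
`i`-simanifold. -/
def sdim {N : ℕ} (S : Set (Euc N)) : ℕ :=
  sSup {i | ∃ T : Set (Euc N), IsSimanifold i T ∧ T ⊆ S}

/-!
Only the closure condition of the induced dehyperplane `P ∩ X` needs topology: one must show that
the connected manifold `M = P ∩ X` lies in the closure of `U = P⁺ ∩ X`, and by symmetry in that of
`P⁻ ∩ X`. The set `U` is open in the manifold `X` and its frontier is a nonempty subset of `M`, so
it suffices that `M ∩ cl U` is open in `M`. If not, there are, in a chart of `X`, a point `q ∈ M`
off `cl U` and a point `a ∈ U` so close together that the segment from `a` to `q` meets `M` only in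
a small disc of `M` centred at `q`. Since `q ∉ cl U`, the part of the frontier of `U` in this disc
can be pushed along the disc, away from its centre `q`, to the boundary of the disc, avoiding `a`
and `q` throughout and ending off the segment from `a` to `q`. By Borsuk's homotopy extension
theorem this contradicts Brouwer's theorem.

Brouwer's theorem also gives the inequality of dimensions for continuous injections of manifolds,
which identifies the dimension of the sides `P^± ∩ X` with that of `X`. It rests on the absence of
a `C¹` retraction of the ball onto the sphere, seen from volumes: if `u` vanishes on the sphere, the
integral of `det (1 + t Du)` over the ball is a polynomial in `t` that equals the volume for small
`t`, hence also for `t = 1`, where `det (1 + Du) = 0` for a retraction `1 + u`.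
-/

open Filter Topology Metric MeasureTheory Module
open scoped Polynomial NNReal

universe u v

theorem exists_polynomial_eval_eq_det_one_add_smul {K V : Type*} [Field K] [AddCommGroup V]
    [Module K V] [FiniteDimensional K V] (A : V →ₗ[K] V) :
    ∃ p : K[X], p.natDegree ≤ finrank K V ∧ ∀ t : K, p.eval t = LinearMap.det (1 + t • A) := by
  classical
  let b := finBasis K V
  let M := LinearMap.toMatrix b b A
  refine ⟨((Polynomial.X : K[X]) • M.map Polynomial.C +
    (1 : Matrix _ _ K).map Polynomial.C).det, ?_, fun t => ?_⟩
  · simpa using Polynomial.natDegree_det_X_add_C_le M 1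
  · rw [← Polynomial.coe_evalRingHom, RingHom.map_det, ← LinearMap.det_toMatrix b,
      map_add (LinearMap.toMatrix b b), map_smul (LinearMap.toMatrix b b), LinearMap.toMatrix_one]
    congr 1
    ext i j
    by_cases h : i = j <;> simp [h, M, add_comm, mul_comm t]

theorem exists_polynomial_eval_eq_integral {α : Type*} [MeasurableSpace α] {μ : Measure α} {n : ℕ}
    {φ : ℝ → α → ℝ} (hφ : ∀ x, ∃ p : ℝ[X], p.natDegree ≤ n ∧ ∀ t, p.eval t = φ t x)
    (hint : ∀ t, Integrable (φ t) μ) :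
    ∃ p : ℝ[X], ∀ t, p.eval t = ∫ x, φ t x ∂μ := by
  classical
  let node : Fin (n + 1) → ℝ := fun j => j
  have hnode : Set.InjOn node (Finset.univ : Finset (Fin (n + 1))) := fun i _ j _ hij =>
    Fin.ext (Nat.cast_injective hij)
  have interpolation (t : ℝ) (x : α) :
      φ t x = ∑ j, φ (node j) x * (Lagrange.basis Finset.univ node j).eval t := by
    obtain ⟨p, hpn, hp⟩ := hφ x
    have hdeg : p.degree < (Finset.univ : Finset (Fin (n + 1))).card := by
      refine Polynomial.degree_le_natDegree.trans_lt ?_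
      rw [Finset.card_univ, Fintype.card_fin]
      exact_mod_cast Nat.lt_succ_of_le hpn
    rw [← hp t, Lagrange.eq_interpolate hnode hdeg, Lagrange.interpolate_apply,
      Polynomial.eval_finsetSum]
    simp only [Polynomial.eval_mul, Polynomial.eval_C, hp]
  refine ⟨∑ j, Polynomial.C (∫ x, φ (node j) x ∂μ) * Lagrange.basis Finset.univ node j,
    fun t => ?_⟩
  simp only [interpolation t]
  rw [integral_finsetSum _ fun j _ => (hint _).mul_const _, Polynomial.eval_finsetSum]
  simp only [Polynomial.eval_mul, Polynomial.eval_C, integral_mul_const]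

theorem inter_frontier_nonempty_of_isPreconnected {X : Type*} [TopologicalSpace X] {s t : Set X}
    (hs : IsPreconnected s) (hst : (s ∩ t).Nonempty) (hst' : (s ∩ tᶜ).Nonempty) :
    (s ∩ frontier t).Nonempty := by
  rw [frontier_eq_closure_inter_closure]
  refine isPreconnected_closed_iff.1 hs _ _ isClosed_closure isClosed_closure (fun x _ => ?_)
    (hst.mono (inter_subset_inter_right _ subset_closure))
    (hst'.mono (inter_subset_inter_right _ subset_closure))
  exact (em (x ∈ t)).imp (fun h => subset_closure h) fun h => subset_closure h

theorem lipschitzWith_indicator_of_frontier {E F : Type*} [NormedAddCommGroup E] [NormedSpace ℝ E]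
    [NormedAddCommGroup F] {s : Set E} {u : E → F} {K : ℝ≥0} (hs : IsClosed s)
    (hu : LipschitzOnWith K u s) (h0 : ∀ x ∈ frontier s, u x = 0) :
    LipschitzWith K (s.indicator u) := by
  have crossing {x y : E} (hx : x ∈ s) (hy : y ∉ s) :
      dist (s.indicator u x) (s.indicator u y) ≤ K * dist x y := by
    obtain ⟨z, hzseg, hz⟩ := inter_frontier_nonempty_of_isPreconnected
      (convex_segment x y).isPreconnected ⟨x, left_mem_segment ℝ x y, hx⟩
      ⟨y, right_mem_segment ℝ x y, hy⟩
    rw [indicator_of_mem hx, indicator_of_notMem hy, ← h0 z hz]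
    refine (hu.dist_le_mul x hx z (hs.frontier_subset hz)).trans ?_
    gcongr
    rw [← dist_add_dist_of_mem_segment hzseg]
    exact le_add_of_nonneg_right dist_nonneg
  refine LipschitzWith.of_dist_le_mul fun x y => ?_
  by_cases hx : x ∈ s <;> by_cases hy : y ∈ s
  · simpa only [indicator_of_mem hx, indicator_of_mem hy] using hu.dist_le_mul x hx y hy
  · exact crossing hx hy
  · rw [dist_comm, dist_comm x]
    exact crossing hy hx
  · simp only [indicator_of_notMem hx, indicator_of_notMem hy, dist_self]
    positivity

theorem bijective_id_add_of_lipschitzWith {E : Type*} [NormedAddCommGroup E] [NormedSpace ℝ E]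
    [CompleteSpace E] {K : ℝ≥0} (hK : K < 1) {k : E → E} (hk : LipschitzWith K k) :
    Function.Bijective fun x => x + k x := by
  have happrox : ApproximatesLinearOn (fun x => x + k x)
      (ContinuousLinearEquiv.refl ℝ E : E →L[ℝ] E) univ K := by
    rw [ApproximatesLinearOn.approximatesLinearOn_iff_lipschitzOnWith, lipschitzOnWith_univ]
    convert hk using 1
    ext x
    simp
  have hc : Subsingleton E ∨
      K < ‖((ContinuousLinearEquiv.refl ℝ E).symm : E →L[ℝ] E)‖₊⁻¹ := by
    rcases subsingleton_or_nontrivial E with hE | hE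
    · exact Or.inl hE
    · exact Or.inr (by simpa using hK)
  exact ⟨injOn_univ.1 (happrox.injOn hc), happrox.surjective hc⟩

theorem eventually_forall_det_one_add_smul_pos {X E : Type*} [TopologicalSpace X]
    [NormedAddCommGroup E] [NormedSpace ℝ E] [FiniteDimensional ℝ E] {s : Set X} (hs : IsCompact s)
    {L : X → E →L[ℝ] E} (hL : Continuous L) :
    ∀ᶠ t : ℝ in 𝓝 0, ∀ x ∈ s, 0 < (1 + t • L x).det := by
  have hcont : Continuous fun p : ℝ × X => (1 + p.1 • L p.2).det :=
    ContinuousLinearMap.continuous_det.comp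
      (continuous_const.add (continuous_fst.smul (hL.comp continuous_snd)))
  refine hs.eventually_forall_of_forall_eventually fun x _ => ?_
  refine hcont.continuousAt.eventually (lt_mem_nhds ?_)
  change (0 : ℝ) < LinearMap.det (1 + (0 : ℝ) • (L x : E →ₗ[ℝ] E))
  simp

section ChangeOfVariables

variable {E : Type*} [NormedAddCommGroup E] [NormedSpace ℝ E] [FiniteDimensional ℝ E]
  [MeasurableSpace E] [BorelSpace E] (μ : Measure E) [μ.IsAddHaarMeasure] {s : Set E} {u : E → E}

theorem eventually_integral_det_one_add_smul_fderiv (hs : IsCompact s) (hsc : Convex ℝ s)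
    (hu : ContDiff ℝ 1 u) (h0 : ∀ x ∈ frontier s, u x = 0) :
    ∀ᶠ t : ℝ in 𝓝 0, ∫ x in s, (1 + t • fderiv ℝ u x).det ∂μ = μ.real s := by
  obtain ⟨C, hC⟩ := hs.exists_bound_of_continuousOn (hu.continuous_fderiv one_ne_zero).continuousOn
  have hlip : LipschitzOnWith C.toNNReal u s :=
    hsc.lipschitzOnWith_of_nnnorm_fderiv_le
      (fun x _ => hu.differentiable one_ne_zero x)
      fun x hx => NNReal.le_toNNReal_of_coe_le (hC x hx)
  have hdet : ∀ᶠ t : ℝ in 𝓝 0, ∀ x ∈ s, 0 < (1 + t • fderiv ℝ u x).det :=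
    eventually_forall_det_one_add_smul_pos hs (hu.continuous_fderiv one_ne_zero)
  have hsmall : ∀ᶠ t : ℝ in 𝓝 0, ‖t‖₊ * C.toNNReal < 1 := by
    have : Tendsto (fun t : ℝ => ‖t‖₊ * C.toNNReal) (𝓝 0) (𝓝 (‖(0 : ℝ)‖₊ * C.toNNReal)) :=
      (continuous_nnnorm.mul continuous_const).tendsto _
    exact this.eventually (gt_mem_nhds (by simp))
  filter_upwards [hdet, hsmall] with t hdet hsmall
  set h : E → E := fun x => x + t • s.indicator u x with h_def
  have hbij : Function.Bijective h := bijective_id_add_of_lipschitzWith hsmall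
    ((lipschitzWith_smul t).comp (lipschitzWith_indicator_of_frontier hs.isClosed hlip h0))
  have hh : EqOn h (fun x => x + t • u x) s := fun x hx => by simp [h_def, hx]
  have himage : h '' s = s := by
    have hcompl : h '' sᶜ = sᶜ := by
      refine (image_congr fun x hx => ?_).trans (image_id' _)
      simp [h_def, indicator_of_notMem hx]
    rwa [image_compl_eq hbij, compl_inj_iff] at hcompl
  have hderiv (x : E) (hx : x ∈ s) : HasFDerivWithinAt h (1 + t • fderiv ℝ u x) s x :=
    (((hasFDerivAt_id x).add ((hu.differentiable one_ne_zero x).hasFDerivAt.const_smul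
      t)).hasFDerivWithinAt).congr hh (hh hx)
  have hcov := integral_image_eq_integral_abs_det_fderiv_smul μ hs.measurableSet hderiv
    hbij.1.injOn fun _ => (1 : ℝ)
  rw [himage] at hcov
  simp only [smul_eq_mul, mul_one, setIntegral_const] at hcov
  rw [hcov]
  exact setIntegral_congr_fun hs.measurableSet fun x hx => (abs_of_pos (hdet x hx)).symm

theorem integral_det_one_add_fderiv (hs : IsCompact s) (hsc : Convex ℝ s)
    (hu : ContDiff ℝ 1 u) (h0 : ∀ x ∈ frontier s, u x = 0) :
    ∫ x in s, (1 + fderiv ℝ u x).det ∂μ = μ.real s := by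
  have hint (t : ℝ) : IntegrableOn (fun x => (1 + t • fderiv ℝ u x).det) s μ := by
    refine (ContinuousLinearMap.continuous_det.comp ?_).continuousOn.integrableOn_compact hs
    exact continuous_const.add ((hu.continuous_fderiv one_ne_zero).const_smul t)
  obtain ⟨p, hp⟩ : ∃ p : ℝ[X], ∀ t, p.eval t = ∫ x in s, (1 + t • fderiv ℝ u x).det ∂μ :=
    exists_polynomial_eval_eq_integral
      (fun x => exists_polynomial_eval_eq_det_one_add_smul (fderiv ℝ u x : E →ₗ[ℝ] E)) hint
  have hconst : p = Polynomial.C (μ.real s) := by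
    refine Polynomial.eq_of_infinite_eval_eq _ _ (infinite_of_mem_nhds 0 ?_)
    filter_upwards [eventually_integral_det_one_add_smul_fderiv μ hs hsc hu h0] with t ht
    exact (hp t).trans (ht.trans Polynomial.eval_C.symm)
  simpa only [hconst, Polynomial.eval_C, one_smul] using (hp 1).symm

end ChangeOfVariables

theorem det_fderiv_eq_zero_of_norm_eq {E : Type*} [NormedAddCommGroup E] [NormedSpace ℝ E]
    [FiniteDimensional ℝ E] {f : E → E} (hf : ContDiff ℝ 1 f) {r : ℝ} (hr : r ≠ 0)
    (hfr : ∀ x, ‖f x‖ = r) (x : E) : (fderiv ℝ f x).det = 0 := by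
  by_contra hdet
  have hsurj : (fderiv ℝ f x : E →ₗ[ℝ] E).range = ⊤ :=
    LinearMap.range_eq_top.2 ((Module.End.isUnit_iff _).1
      ((LinearMap.isUnit_iff_isUnit_det _).2 (isUnit_iff_ne_zero.2 hdet))).2
  have hnhds := (hf.contDiffAt.hasStrictFDerivAt one_ne_zero).map_nhds_eq_of_surj hsurj
  have hmem : sphere (0 : E) r ∈ 𝓝 (f x) := by
    rw [← hnhds, mem_map]
    exact univ_mem' fun y => by simpa using hfr y
  exact (interior_sphere (0 : E) hr).le (mem_interior_iff_mem_nhds.2 hmem)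

theorem not_forall_norm_eq_of_eqOn_sphere {E : Type*} [NormedAddCommGroup E] [NormedSpace ℝ E]
    [FiniteDimensional ℝ E] {f : E → E} (hf : ContDiff ℝ 1 f) {r : ℝ} (hr : 0 < r)
    (hid : ∀ x, ‖x‖ = r → f x = x) : ¬ ∀ x, ‖f x‖ = r := by
  intro hfr
  borelize E
  let μ : Measure E := Measure.addHaar
  have hu : ContDiff ℝ 1 fun x => f x - x := hf.sub contDiff_id
  have hfderiv (x : E) : 1 + fderiv ℝ (fun x => f x - x) x = fderiv ℝ f x := by
    rw [fderiv_fun_sub (hf.differentiable one_ne_zero x) differentiableAt_fun_id, fderiv_fun_id]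
    exact add_sub_cancel _ _
  have hvol := integral_det_one_add_fderiv μ (isCompact_closedBall (0 : E) r)
    (convex_closedBall 0 r) hu fun x hx => by
      rw [frontier_closedBall (0 : E) hr.ne', mem_sphere_zero_iff_norm] at hx
      simp [hid x hx]
  simp only [hfderiv, det_fderiv_eq_zero_of_norm_eq hf hr.ne' hfr, integral_zero] at hvol
  exact (ENNReal.toReal_pos (measure_closedBall_pos μ (0 : E) hr).ne'
    measure_closedBall_lt_top.ne).ne hvol

section

variable {E : Type*} [NormedAddCommGroup E] [InnerProductSpace ℝ E] [FiniteDimensional ℝ E]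

theorem exists_eq_zero_of_eq_id_of_le_norm {F : E → E} (hF : Continuous F) {r : ℝ}
    (hid : ∀ x, r ≤ ‖x‖ → F x = x) : ∃ x, F x = 0 := by
  by_contra! hne
  have hr : 0 < r := by
    by_contra! h
    exact hne 0 (hid 0 (by simpa using h))
  obtain ⟨g, hg, hgF, hsupp⟩ := (hF.sub continuous_id).exists_contDiff_approx 1
    hF.norm fun x => norm_pos_iff.2 (hne x)
  set G : E → E := fun x => g x + x with G_def
  have hG : ContDiff ℝ 1 G := hg.add contDiff_id
  have hGne (x : E) : G x ≠ 0 := fun hx => by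
    have hlt := hgF x
    have hgx : g x = -x := eq_neg_of_add_eq_zero_left hx
    rw [hgx, dist_eq_norm, Pi.sub_apply, id, show -x - (F x - x) = -F x by abel, norm_neg] at hlt
    exact lt_irrefl _ hlt
  have hGid (x : E) (hx : r ≤ ‖x‖) : G x = x := by
    have : g x = 0 := by
      by_contra h
      exact hsupp h (by simp [hid x hx])
    simp [G_def, this]
  refine not_forall_norm_eq_of_eqOn_sphere (f := fun x => (r / ‖G x‖) • G x) ?_ hr ?_ ?_
  · exact (contDiff_const.div (hG.norm ℝ hGne) fun x => norm_ne_zero_iff.2 (hGne x)).smul hG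
  · intro x hx
    simp only [hGid x hx.ge, hx, div_self hr.ne', one_smul]
  · intro x
    rw [norm_smul, norm_div, norm_norm, Real.norm_of_nonneg hr.le,
      div_mul_cancel₀ _ (norm_ne_zero_iff.2 (hGne x))]

theorem exists_eq_zero_of_dist_id_le {g : E → E} {r ρ : ℝ} (hρ : 0 < ρ) (hρr : ρ < r)
    (hg : ContinuousOn g (closedBall 0 r)) (hgid : ∀ x ∈ closedBall 0 r, dist (g x) x ≤ ρ) :
    ∃ x ∈ closedBall 0 r, g x = 0 := by
  have := instTietzeExtensionClosedBall ℝ (0 : E) hρ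
  obtain ⟨e, he⟩ := ContinuousMap.exists_restrict_eq (isClosed_closedBall (x := (0 : E)) (ε := r))
    (Y := closedBall (0 : E) ρ)
    ⟨fun x => ⟨g x - x, mem_closedBall_zero_iff.2 ((dist_eq_norm _ _).symm.trans_le (hgid x x.2))⟩,
      (hg.domRestrict.sub continuous_subtype_val).subtype_mk fun x =>
        mem_closedBall_zero_iff.2 ((dist_eq_norm _ _).symm.trans_le (hgid x x.2))⟩
  have heg (x : E) (hx : x ∈ closedBall 0 r) : (e x : E) = g x - x :=
    congrArg Subtype.val (DFunLike.congr_fun he ⟨x, hx⟩)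
  let cutoff : E → ℝ := fun x => max 0 (min 1 (r + 1 - ‖x‖))
  obtain ⟨x, hx⟩ := exists_eq_zero_of_eq_id_of_le_norm (F := fun x => x + cutoff x • (e x : E))
    (by fun_prop) (r := r + 1) fun x hx => by
      have : cutoff x = 0 := max_eq_left ((min_le_right _ _).trans (by linarith))
      simp [this]
  have hxr : ‖x‖ ≤ r := by
    have hcut0 : ∀ x, 0 ≤ cutoff x := fun x => le_max_left _ _
    have hnorm : ‖x‖ = cutoff x * ‖(e x : E)‖ := by
      rw [← Real.norm_of_nonneg (hcut0 x), ← norm_smul, ← norm_neg x,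
        neg_eq_of_add_eq_zero_right hx]
    have he : ‖(e x : E)‖ ≤ ρ := mem_closedBall_zero_iff.1 (e x).2
    have : cutoff x ≤ 1 := max_le zero_le_one (min_le_left _ _)
    nlinarith [norm_nonneg (e x : E)]
  have hcut : cutoff x = 1 := by
    simp only [cutoff]
    rw [min_eq_left (by linarith), max_eq_right zero_le_one]
  refine ⟨x, by simpa using hxr, ?_⟩
  simpa [hcut, heg x (by simpa using hxr)] using hx

end

theorem exists_continuous_leftInvOn {X : Type v} {Y : Type u} [TopologicalSpace X]
    [TietzeExtension.{u} X] [TopologicalSpace Y] [T4Space Y] {K : Set X} (hK : IsCompact K)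
    {β : X → Y} (hβ : ContinuousOn β K) (hβi : InjOn β K) : ∃ α : C(Y, X), LeftInvOn α β K := by
  have := isCompact_iff_compactSpace.1 hK
  obtain ⟨α, hα⟩ := ContinuousMap.exists_extension'
    (hβ.domRestrict.isClosedEmbedding hβi.injective)
    (⟨Subtype.val, continuous_subtype_val⟩ : C(K, X))
  exact ⟨α, fun x hx => congrFun hα ⟨x, hx⟩⟩

theorem finrank_le_of_continuousOn_injOn_closedBall {E F : Type*} [NormedAddCommGroup E]
    [InnerProductSpace ℝ E] [FiniteDimensional ℝ E] [NormedAddCommGroup F] [NormedSpace ℝ F]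
    [FiniteDimensional ℝ F] {h : E → F} {z : E} {r : ℝ} (hr : 0 < r)
    (hh : ContinuousOn h (closedBall z r)) (hi : InjOn h (closedBall z r)) :
    finrank ℝ E ≤ finrank ℝ F := by
  by_contra! hlt
  have := TietzeExtension.of_tvs ℝ (E := E)
  obtain ⟨α, hα⟩ := exists_continuous_leftInvOn (isCompact_closedBall z r) hh hi
  obtain ⟨Q, hQ, hQα, -⟩ := α.continuous.exists_contDiff_approx 1
    (continuous_const (y := r / 4)) fun _ => by positivity
  obtain ⟨y, hy, hzy⟩ := (hQ.dense_compl_range_of_finrank_lt_finrank hlt).exists_dist_lt z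
    (show 0 < r / 4 by positivity)
  have hball {x : E} (hx : x ∈ closedBall 0 r) : z + x ∈ closedBall z r := by simpa using hx
  obtain ⟨x, -, hx⟩ := exists_eq_zero_of_dist_id_le (g := fun x => Q (h (z + x)) - y)
    (half_pos hr) (half_lt_self hr)
    ((hQ.continuous.comp_continuousOn (hh.comp (by fun_prop) fun x hx => hball hx)).sub
      continuousOn_const) fun x hx => by
    have hQx := hQα (h (z + x))
    rw [hα (hball hx)] at hQx
    calc dist (Q (h (z + x)) - y) x = dist (Q (h (z + x))) (y + x) := by
          rw [dist_eq_norm, dist_eq_norm]; congr 1; abel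
      _ ≤ dist (Q (h (z + x))) (z + x) + dist (z + x) (y + x) := dist_triangle _ _ _
      _ ≤ r / 2 := by rw [dist_add_right]; linarith
  exact hy ⟨_, sub_eq_zero.1 hx⟩

theorem exists_closedBall_chartAt_subset {F M : Type*} [PseudoMetricSpace F] [TopologicalSpace M]
    [ChartedSpace F M] (p : M) {S : Set M} (hS : S ∈ 𝓝 p) :
    ∃ δ > 0, closedBall (chartAt F p p) δ ⊆ (chartAt F p).target ∩ (chartAt F p).symm ⁻¹' S := by
  have hp := (chartAt F p).map_source (mem_chart_source F p)
  refine nhds_basis_closedBall.mem_iff.1 (inter_mem ((chartAt F p).open_target.mem_nhds hp) ?_)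
  refine ((chartAt F p).continuousAt_symm hp).preimage_mem_nhds ?_
  rwa [(chartAt F p).left_inv (mem_chart_source F p)]

theorem finrank_le_of_continuous_injective {E F : Type*} [NormedAddCommGroup E]
    [InnerProductSpace ℝ E] [FiniteDimensional ℝ E] [NormedAddCommGroup F] [NormedSpace ℝ F]
    [FiniteDimensional ℝ F] {S X : Type*} [TopologicalSpace S] [TopologicalSpace X]
    [ChartedSpace E S] [ChartedSpace F X] [Nonempty S] {f : S → X} (hf : Continuous f)
    (hfi : Function.Injective f) : finrank ℝ E ≤ finrank ℝ F := by
  obtain ⟨s⟩ := ‹Nonempty S›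
  let ψ := chartAt E s
  let φ := chartAt F (f s)
  obtain ⟨r, hr, hsub⟩ := exists_closedBall_chartAt_subset (F := E) s
    (hf.continuousAt.preimage_mem_nhds (chart_source_mem_nhds F (f s)))
  refine finrank_le_of_continuousOn_injOn_closedBall (h := φ ∘ f ∘ ψ.symm)
    (z := ψ s) hr ?_ ?_
  · exact φ.continuousOn.comp (hf.comp_continuousOn (ψ.continuousOn_symm.mono
      fun y hy => (hsub hy).1)) fun y hy => (hsub hy).2
  · exact fun y hy y' hy' h => ψ.symm.injOn (hsub hy).1 (hsub hy').1
      (hfi (φ.injOn (hsub hy).2 (hsub hy').2 h))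

/-- Borsuk's homotopy extension theorem. -/
theorem exists_extension_ne_of_homotopy {X : Type u} {F : Type v} [TopologicalSpace X]
    [TopologicalSpace.PseudoMetrizableSpace X] [TopologicalSpace F] [T1Space F]
    [TietzeExtension.{u} F] {C Z : Set X} (hC : IsClosed C) (hZ : IsClosed Z) {c : F}
    {h : X × ℝ → F} {g : X → F}
    (hh : ContinuousOn h (Z ×ˢ Icc 0 1)) (hhc : ∀ x ∈ Z, ∀ t ∈ Icc (0 : ℝ) 1, h (x, t) ≠ c)
    (hg : ContinuousOn g C) (hgc : ∀ x ∈ C, g x ≠ c) (hgh : ∀ x ∈ Z ∩ C, g x = h (x, 0)) :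
    ∃ g' : X → F, ContinuousOn g' C ∧ (∀ x ∈ C, g' x ≠ c) ∧ ∀ x ∈ Z, g' x = h (x, 1) := by
  classical
  let k : X × ℝ → F := fun p => if p.1 ∈ Z then h p else g p.1
  have hS : IsClosed (Z ×ˢ Icc (0 : ℝ) 1) := hZ.prod isClosed_Icc
  have hS' : IsClosed (C ×ˢ ({0} : Set ℝ)) := hC.prod isClosed_singleton
  have hkh : EqOn k h (Z ×ˢ Icc (0 : ℝ) 1) := fun p hp => if_pos hp.1
  have hkg : EqOn k (fun p => g p.1) (C ×ˢ ({0} : Set ℝ)) := by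
    rintro ⟨x, _⟩ ⟨hx, rfl⟩
    by_cases hxZ : x ∈ Z
    · exact (if_pos hxZ).trans (hgh x ⟨hxZ, hx⟩).symm
    · exact if_neg hxZ
  have hk : ContinuousOn k (Z ×ˢ Icc (0 : ℝ) 1 ∪ C ×ˢ ({0} : Set ℝ)) :=
    (hh.congr hkh).union_of_isClosed
      ((hg.comp continuousOn_fst fun p hp => hp.1).congr hkg) hS hS'
  obtain ⟨K, hK⟩ := ContinuousMap.exists_restrict_eq (hS.union hS') ⟨_, hk.domRestrict⟩
  have hKh {x : X} (hx : x ∈ Z) {t : ℝ} (ht : t ∈ Icc (0 : ℝ) 1) : K (x, t) = h (x, t) :=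
    (DFunLike.congr_fun hK ⟨(x, t), Or.inl ⟨hx, ht⟩⟩).trans (hkh ⟨hx, ht⟩)
  have hKg {x : X} (hx : x ∈ C) : K (x, 0) = g x :=
    (DFunLike.congr_fun hK ⟨(x, 0), Or.inr ⟨hx, rfl⟩⟩).trans
      (hkg (mk_mem_prod hx (mem_singleton 0)))
  let bad : Set X := Prod.fst '' {p : X × Icc (0 : ℝ) 1 | K (p.1, p.2) = c}
  have hbad : IsClosed bad := isClosedMap_fst_of_compactSpace _
    (isClosed_singleton.preimage (K.continuous.comp (by fun_prop)))
  have hdisj : Disjoint bad Z := by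
    rw [Set.disjoint_left]
    rintro _ ⟨⟨x, t⟩, hxt, rfl⟩ hxZ
    exact hhc x hxZ t t.2 ((hKh hxZ t.2).symm.trans hxt)
  obtain ⟨l, hl0, hl1, hl⟩ := exists_continuous_zero_one_of_isClosed hbad hZ hdisj
  refine ⟨fun x => K (x, l x), by fun_prop, fun x hx (hKx : K (x, l x) = c) => ?_, fun x hx => ?_⟩
  · have hlx : l x = 0 := hl0 ⟨(x, ⟨l x, hl x⟩), hKx, rfl⟩
    rw [hlx, hKg hx] at hKx
    exact hgc x hx hKx
  · have hlx : l x = 1 := hl1 hx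
    exact (hKh hx (hl x)).trans (by rw [hlx])

theorem exists_mem_closure_eq_zero_of_eqOn_frontier {E : Type*} [NormedAddCommGroup E]
    [InnerProductSpace ℝ E] [FiniteDimensional ℝ E] {V : Set E} (hV : Bornology.IsBounded V) {a : E}
    (ha : a ∈ V) {g : E → E} (hg : ContinuousOn g (closure V))
    (hga : EqOn g (fun x => x - a) (frontier V)) : ∃ x ∈ closure V, g x = 0 := by
  classical
  by_contra! hg0
  let G : E → E := fun x => if x ∈ closure V then g x else x - a
  have hG : Continuous G := continuous_if (fun x hx => hga (frontier_closure_subset hx))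
    (by simpa using hg) (by fun_prop)
  have hG0 (x : E) : G x ≠ 0 := by
    by_cases hx : x ∈ closure V
    · simpa only [G, hx, if_true] using hg0 x hx
    · simpa only [G, hx, if_false] using
        sub_ne_zero.2 (ne_of_mem_of_not_mem (subset_closure ha) hx).symm
  obtain ⟨r, hr⟩ := hV.closure.subset_ball a
  obtain ⟨x, hx⟩ := exists_eq_zero_of_eq_id_of_le_norm (F := fun x => G (a + x))
    (hG.comp (by fun_prop)) (r := r) fun x hx => by
      have : a + x ∉ closure V := fun h => by simpa [hx.not_gt] using hr h
      simp only [G, this, if_false, add_sub_cancel_left]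
  exact hG0 _ hx

/- The frontier maps `x - q`, `ξ (x, 1) - q`, `ξ (x, 1) - a` and `x - a` are successively homotopic
without zeros, so the zero-free extension `x - q` of the first yields one of the last. -/
theorem exists_mem_frontier_mem_segment_of_homotopy {E : Type*} [NormedAddCommGroup E]
    [InnerProductSpace ℝ E] [FiniteDimensional ℝ E] {V : Set E} (hV : Bornology.IsBounded V)
    {a q : E} (ha : a ∈ V) (hq : q ∉ closure V) {ξ : E × ℝ → E}
    (hξ : ContinuousOn ξ (frontier V ×ˢ Icc 0 1)) (hξ0 : ∀ x ∈ frontier V, ξ (x, 0) = x)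
    (hξa : ∀ x ∈ frontier V, ∀ t ∈ Icc (0 : ℝ) 1, ξ (x, t) ≠ a)
    (hξq : ∀ x ∈ frontier V, ∀ t ∈ Icc (0 : ℝ) 1, ξ (x, t) ≠ q) :
    ∃ x ∈ frontier V, ξ (x, 1) ∈ segment ℝ a q := by
  by_contra! hξs
  have : TietzeExtension E := TietzeExtension.of_tvs ℝ
  have hξ1 : ContinuousOn (fun x => ξ (x, 1)) (frontier V) :=
    hξ.comp (by fun_prop) fun x hx => ⟨hx, right_mem_Icc.2 zero_le_one⟩
  have hrev {t : ℝ} (ht : t ∈ Icc (0 : ℝ) 1) : 1 - t ∈ Icc (0 : ℝ) 1 := by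
    rw [mem_Icc] at ht ⊢; constructor <;> linarith
  obtain ⟨g₁, hg₁, hg₁0, hg₁ξ⟩ := exists_extension_ne_of_homotopy isClosed_closure
    (isClosed_frontier (s := V)) (h := fun p => ξ p - q) (g := fun x => x - q) (c := 0)
    (hξ.sub continuousOn_const) (fun x hx t ht => sub_ne_zero.2 (hξq x hx t ht)) (by fun_prop)
    (fun x hx => sub_ne_zero.2 (ne_of_mem_of_not_mem hx hq)) fun x hx => by simp [hξ0 x hx.1]
  obtain ⟨g₂, hg₂, hg₂0, hg₂ξ⟩ := exists_extension_ne_of_homotopy isClosed_closure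
    (isClosed_frontier (s := V)) (h := fun p => ξ (p.1, 1) - AffineMap.lineMap q a p.2)
    ((hξ1.comp continuousOn_fst fun p hp => hp.1).sub
      (AffineMap.lineMap_continuous.comp_continuousOn continuousOn_snd))
    (fun x hx t ht => sub_ne_zero.2 fun h => hξs x hx (by
      rw [h, segment_symm, segment_eq_image_lineMap]
      exact mem_image_of_mem _ ht)) hg₁ hg₁0 fun x hx => by simp [hg₁ξ x hx.1]
  obtain ⟨g₃, hg₃, hg₃0, hg₃ξ⟩ := exists_extension_ne_of_homotopy isClosed_closure
    (isClosed_frontier (s := V)) (h := fun p => ξ (p.1, 1 - p.2) - a)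
    ((hξ.comp (by fun_prop) fun p hp => ⟨hp.1, hrev hp.2⟩).sub continuousOn_const)
    (fun x hx t ht => sub_ne_zero.2 (hξa x hx _ (hrev ht))) hg₂ hg₂0
    fun x hx => by simp [hg₂ξ x hx.1]
  obtain ⟨x, hx, hgx⟩ := exists_mem_closure_eq_zero_of_eqOn_frontier hV ha hg₃
    fun x hx => by simp [hg₃ξ x hx, hξ0 x hx]
  exact hg₃0 x hx hgx

section RadialPush

variable {F : Type*} [NormedAddCommGroup F] [NormedSpace ℝ F]

/-- The straight-line homotopy, with time parameter `t`, that moves `y` radially from the centre `s`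
to the sphere of radius `R` around `s`. Its value at `y = s` is of no interest. -/
def radialPush (s : F) (R t : ℝ) (y : F) : F :=
  AffineMap.lineMap y (s + (R / ‖y - s‖) • (y - s)) t

variable {s y : F} {R t : ℝ}

@[simp]
theorem radialPush_zero : radialPush s R 0 y = y :=
  AffineMap.lineMap_apply_zero _ _

theorem radialPush_of_mem_sphere (hR : R ≠ 0) (hy : y ∈ sphere s R) : radialPush s R t y = y := by
  rw [radialPush, mem_sphere_iff_norm.1 hy, div_self hR, one_smul, add_sub_cancel,
    AffineMap.lineMap_same_apply]

theorem dist_radialPush_center (hR : 0 ≤ R) (hy : y ≠ s) (ht : t ∈ Icc (0 : ℝ) 1) :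
    dist (radialPush s R t y) s = (1 - t) * dist y s + t * R := by
  have hpos : 0 < ‖y - s‖ := norm_pos_iff.2 (sub_ne_zero.2 hy)
  have hscale : 0 ≤ 1 - t + t * (R / ‖y - s‖) :=
    add_nonneg (sub_nonneg.2 ht.2) (mul_nonneg ht.1 (by positivity))
  have hsub : radialPush s R t y - s = (1 - t + t * (R / ‖y - s‖)) • (y - s) := by
    rw [radialPush, AffineMap.lineMap_apply_module]
    module
  rw [dist_eq_norm, dist_eq_norm, hsub, norm_smul, Real.norm_of_nonneg hscale]
  field_simp

theorem radialPush_mem_closedBall_diff_center (hR : 0 < R) (hy : y ∈ closedBall s R \ {s})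
    (ht : t ∈ Icc (0 : ℝ) 1) : radialPush s R t y ∈ closedBall s R \ {s} := by
  have hdist := dist_radialPush_center hR.le hy.2 ht
  have hpos : 0 < dist y s := dist_pos.2 hy.2
  have hle : dist y s ≤ R := hy.1
  refine ⟨?_, dist_pos.1 ?_⟩
  · rw [mem_closedBall, hdist]
    nlinarith [ht.1, ht.2]
  · rw [hdist]
    nlinarith [ht.1, ht.2]

theorem radialPush_one_mem_sphere (hR : 0 ≤ R) (hy : y ≠ s) : radialPush s R 1 y ∈ sphere s R := by
  rw [mem_sphere, dist_radialPush_center hR hy (right_mem_Icc.2 zero_le_one)]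
  ring

theorem continuousOn_radialPush :
    ContinuousOn (fun p : F × ℝ => radialPush s R p.2 p.1) ({s}ᶜ ×ˢ univ) := by
  have hnorm (p : F × ℝ) (hp : p ∈ ({s}ᶜ ×ˢ univ : Set (F × ℝ))) : ‖p.1 - s‖ ≠ 0 :=
    norm_ne_zero_iff.2 (sub_ne_zero.2 hp.1)
  simp only [radialPush, AffineMap.lineMap_apply_module]
  fun_prop (disch := assumption)

theorem continuousOn_comp_radialPush_leftInv {Y : Type*} [TopologicalSpace Y] {β : F → Y}
    {α : C(Y, F)} (hR : 0 < R) (hβ : ContinuousOn β (closedBall s R))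
    (hα : LeftInvOn α β (closedBall s R)) :
    ContinuousOn (fun p : Y × ℝ => β (radialPush s R p.2 (α p.1)))
      ((β '' (closedBall s R \ {s})) ×ˢ Icc 0 1) := by
  refine hβ.comp (continuousOn_radialPush.comp (f := fun p : Y × ℝ => (α p.1, p.2))
    (by fun_prop) ?_) ?_
  all_goals
    rintro ⟨_, t⟩ ⟨⟨y, hy, rfl⟩, ht⟩
    simp only [hα hy.1]
  · exact ⟨hy.2, mem_univ t⟩
  · exact (radialPush_mem_closedBall_diff_center hR hy ht).1

end RadialPush

theorem exists_homotopy_push_to_sphere {F : Type v} {Y : Type u} [NormedAddCommGroup F]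
    [NormedSpace ℝ F] [FiniteDimensional ℝ F] [TopologicalSpace Y] [T4Space Y] {β : F → Y} {s : F}
    {R : ℝ} (hR : 0 < R) (hβ : ContinuousOn β (closedBall s R)) (hβi : InjOn β (closedBall s R))
    {Z : Set Y} (hZ : IsClosed Z) (hZβ : IsClosed (Z \ β '' ball s R)) (hs : β s ∉ Z) :
    ∃ ξ : Y × ℝ → Y, ContinuousOn ξ (Z ×ˢ Icc 0 1) ∧ (∀ x, ξ (x, 0) = x) ∧
      (∀ x ∉ β '' ball s R, ∀ t, ξ (x, t) = x) ∧
      ∀ x ∈ Z ∩ β '' ball s R, ξ (x, 1) ∈ β '' sphere s R ∧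
        ∀ t ∈ Icc (0 : ℝ) 1, ξ (x, t) ∈ β '' (closedBall s R \ {s}) := by
  classical
  have : TietzeExtension.{u} F := TietzeExtension.of_tvs ℝ
  obtain ⟨α, hα⟩ := exists_continuous_leftInvOn (isCompact_closedBall s R) hβ hβi
  let ξ : Y × ℝ → Y := fun p => if p.1 ∈ β '' ball s R then β (radialPush s R p.2 (α p.1)) else p.1
  have hξ_off (x : Y) (hx : x ∉ β '' ball s R) (t : ℝ) : ξ (x, t) = x := if_neg hx
  have hξ_disc (y : F) (hy : y ∈ closedBall s R) (t : ℝ) :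
      ξ (β y, t) = β (radialPush s R t y) := by
    by_cases hball : y ∈ ball s R
    · exact (if_pos (mem_image_of_mem β hball)).trans (by rw [hα hy])
    · have hsph : y ∈ sphere s R := le_antisymm hy (not_lt.1 hball)
      have hβy : β y ∉ β '' ball s R := fun h => hball
        ((hβi.mem_image_iff ball_subset_closedBall hy).1 h)
      rw [hξ_off _ hβy, radialPush_of_mem_sphere hR.ne' hsph]
  have hcenter (y : F) (hy : y ∈ closedBall s R) (hyZ : β y ∈ Z) : y ∈ closedBall s R \ {s} :=
    ⟨hy, fun h => hs (h ▸ hyZ)⟩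
  refine ⟨ξ, ?_, fun x => ?_, hξ_off, ?_⟩
  · have hclosed : IsClosed (β '' closedBall s R) :=
      ((isCompact_closedBall s R).image_of_continuousOn hβ).isClosed
    have hdisc : ContinuousOn ξ ((Z ∩ β '' closedBall s R) ×ˢ Icc (0 : ℝ) 1) := by
      refine ((continuousOn_comp_radialPush_leftInv hR hβ hα).mono ?_).congr ?_
      · rintro ⟨_, t⟩ ⟨⟨hx, y, hy, rfl⟩, ht⟩
        exact ⟨mem_image_of_mem β (hcenter y hy hx), ht⟩
      · rintro ⟨_, t⟩ ⟨⟨hx, y, hy, rfl⟩, -⟩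
        simp only [hξ_disc y hy, hα hy]
    have hrest : ContinuousOn ξ ((Z \ β '' ball s R) ×ˢ Icc (0 : ℝ) 1) :=
      continuousOn_fst.congr fun p hp => hξ_off _ hp.1.2 _
    refine (hdisc.union_of_isClosed hrest ((hZ.inter hclosed).prod isClosed_Icc)
      (hZβ.prod isClosed_Icc)).mono ?_
    rw [← union_prod]
    exact prod_mono_left fun x hx => (em (x ∈ β '' ball s R)).imp
      (fun h => ⟨hx, image_mono ball_subset_closedBall h⟩) fun h => ⟨hx, h⟩
  · by_cases hx : x ∈ β '' ball s R
    · obtain ⟨y, hy, rfl⟩ := hx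
      rw [hξ_disc y (ball_subset_closedBall hy), radialPush_zero]
    · exact hξ_off x hx 0
  · rintro _ ⟨hyZ, y, hy, rfl⟩
    have hy' := hcenter y (ball_subset_closedBall hy) hyZ
    simp only [hξ_disc y hy'.1]
    exact ⟨mem_image_of_mem β (radialPush_one_mem_sphere hR.le hy'.2),
      fun t ht => mem_image_of_mem β (radialPush_mem_closedBall_diff_center hR hy' ht)⟩

theorem mem_closure_of_segment_inter_subset_image_ball {E F : Type*} [NormedAddCommGroup E]
    [InnerProductSpace ℝ E] [FiniteDimensional ℝ E] [NormedAddCommGroup F] [NormedSpace ℝ F]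
    [FiniteDimensional ℝ F] {V : Set E} (hV : IsOpen V) (hVb : Bornology.IsBounded V) {β : F → E}
    {s : F} {R : ℝ} (hR : 0 < R) (hβ : ContinuousOn β (closedBall s R))
    (hβi : InjOn β (closedBall s R)) (hβV : Disjoint (β '' closedBall s R) V)
    (hfr : IsClosed (frontier V \ β '' ball s R)) {a : E} (ha : a ∈ V)
    (hseg : segment ℝ a (β s) ∩ (frontier V ∪ β '' closedBall s R) ⊆ β '' ball s R) :
    β s ∈ closure V := by
  by_contra hs
  have hsfr : β s ∉ frontier V := fun h => hs (frontier_subset_closure h)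
  obtain ⟨ξ, hξ, hξ0, hξ_off, hξ_disc⟩ :=
    exists_homotopy_push_to_sphere hR hβ hβi isClosed_frontier hfr hsfr
  obtain ⟨x, hx, hx1⟩ := exists_mem_frontier_mem_segment_of_homotopy hVb ha hs hξ
    (fun x _ => hξ0 x)
    (fun x hx t ht h => by
      by_cases hxβ : x ∈ β '' ball s R
      · exact disjoint_left.1 hβV (image_mono sdiff_subset ((hξ_disc x ⟨hx, hxβ⟩).2 t ht)) (h ▸ ha)
      · exact (hV.frontier_eq ▸ hx).2 ((hξ_off x hxβ t).symm.trans h ▸ ha))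
    (fun x hx t ht h => by
      by_cases hxβ : x ∈ β '' ball s R
      · obtain ⟨y, hy, hyξ⟩ := (hξ_disc x ⟨hx, hxβ⟩).2 t ht
        exact hy.2 (hβi hy.1 (mem_closedBall_self hR.le) (hyξ.trans h))
      · exact hsfr ((hξ_off x hxβ t).symm.trans h ▸ hx))
  by_cases hxβ : x ∈ β '' ball s R
  · obtain ⟨y, hy, hyξ⟩ := (hξ_disc x ⟨hx, hxβ⟩).1
    have hy' := sphere_subset_closedBall hy
    have hmem := hseg ⟨hx1, Or.inr (hyξ ▸ mem_image_of_mem β hy')⟩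
    rw [← hyξ, hβi.mem_image_iff ball_subset_closedBall hy'] at hmem
    exact hmem.ne hy
  · rw [hξ_off x hxβ] at hx1
    exact hxβ (hseg ⟨hx1, Or.inl hx⟩)

section Frontier

variable {E M : Type*} [NormedAddCommGroup E] [InnerProductSpace ℝ E] [FiniteDimensional ℝ E]
  [TopologicalSpace M]

theorem mem_closure_of_isEmbedding_of_convex {F : Type*} [NormedAddCommGroup F]
    [NormedSpace ℝ F] [FiniteDimensional ℝ F] {ι : M → E} (hι : IsEmbedding ι) {V B C : Set E}
    (hV : IsOpen V) (hVb : Bornology.IsBounded V) (hιV : Disjoint (range ι) V) (hB : IsOpen B)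
    (hfr : frontier V ∩ B ⊆ range ι) {ψ : OpenPartialHomeomorph M F} {q : M} {R : ℝ} (hR : 0 < R)
    (hdisc : closedBall (ψ q) R ⊆ ψ.target ∩ ψ.symm ⁻¹' (ι ⁻¹' B)) (hC : Convex ℝ C) (hCB : C ⊆ B)
    (hCψ : ι ⁻¹' C ⊆ ψ.source ∩ ψ ⁻¹' ball (ψ q) R) (hq : ι q ∈ C) (hCV : (C ∩ V).Nonempty) :
    ι q ∈ closure V := by
  obtain ⟨a, haC, haV⟩ := hCV
  obtain ⟨O, hO, hOψ⟩ := hι.isInducing.isOpen_iff.1 (ψ.isOpen_inter_preimage isOpen_ball)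
  have htarget : closedBall (ψ q) R ⊆ ψ.target := fun y hy => (hdisc hy).1
  have hβrange (S : Set F) : (ι ∘ ψ.symm) '' S ⊆ range ι := by
    rw [image_comp]; exact image_subset_range _ _
  have himage : (ι ∘ ψ.symm) '' ball (ψ q) R = O ∩ range ι := by
    rw [image_comp, ψ.symm_image_eq_source_inter_preimage (ball_subset_closedBall.trans htarget),
      ← hOψ, image_preimage_eq_inter_range]
  have hclosed : frontier V \ (ι ∘ ψ.symm) '' ball (ψ q) R = frontier V \ (O ∩ B) := by
    rw [himage]
    refine subset_antisymm (fun x hx => ⟨hx.1, fun h => hx.2 ⟨h.1, hfr ⟨hx.1, h.2⟩⟩⟩) ?_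
    refine fun x hx => ⟨hx.1, fun h => hx.2 ⟨h.1, ?_⟩⟩
    obtain ⟨y, hy, rfl⟩ := himage.ge h
    exact (hdisc (ball_subset_closedBall hy)).2
  have hcenter : (ι ∘ ψ.symm) (ψ q) = ι q := congrArg ι (ψ.left_inv (hCψ hq).1)
  rw [← hcenter]
  refine mem_closure_of_segment_inter_subset_image_ball hV hVb hR
    (hι.continuous.comp_continuousOn (ψ.continuousOn_symm.mono htarget))
    (hι.injective.comp_injOn (ψ.symm.injOn.mono htarget)) (hιV.mono_left (hβrange _))
    (hclosed ▸ isClosed_frontier.sdiff (hO.inter hB)) haV ?_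
  rintro x ⟨hx, hxV⟩
  have hxC : x ∈ C := hC.segment_subset haC (hcenter ▸ hq) hx
  obtain ⟨m, rfl⟩ : x ∈ range ι := hxV.elim (fun h => hfr ⟨h, hCB hxC⟩) fun h => hβrange _ h
  exact himage.ge ⟨hOψ.ge (hCψ hxC), mem_range_self m⟩

theorem eventually_mem_closure_of_isEmbedding (F : Type*) [NormedAddCommGroup F]
    [NormedSpace ℝ F] [FiniteDimensional ℝ F] [ChartedSpace F M] {ι : M → E}
    (hι : IsEmbedding ι) {U G : Set E} (hG : IsOpen G) (hUG : IsOpen (U ∩ G))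
    (hιU : Disjoint (range ι) U)
    (hfr : frontier U ∩ G ⊆ range ι) {p : M} (hpG : ι p ∈ G) (hp : ι p ∈ closure U) :
    ∀ᶠ q in 𝓝 p, ι q ∈ closure U := by
  set ψ := chartAt F p
  obtain ⟨r, hr, hrG⟩ := isOpen_iff.1 hG _ hpG
  have hV : IsOpen (U ∩ ball (ι p) r) := by
    rw [← inter_eq_right.2 hrG, ← inter_assoc]
    exact hUG.inter isOpen_ball
  have hfrV : frontier (U ∩ ball (ι p) r) ∩ ball (ι p) r ⊆ range ι := by
    rw [frontier_inter_open_inter isOpen_ball]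
    exact (inter_subset_inter_right _ hrG).trans hfr
  obtain ⟨δ', hδ', hδr⟩ := exists_closedBall_chartAt_subset (F := F) p
    (hι.continuous.continuousAt.preimage_mem_nhds (ball_mem_nhds (ι p) hr))
  obtain ⟨δ, hδ, rfl⟩ : ∃ δ, 0 < δ ∧ δ' = 3 * δ := ⟨δ' / 3, by positivity, by ring⟩
  obtain ⟨O, hO, hOψ⟩ := hι.isInducing.isOpen_iff.1 (ψ.isOpen_inter_preimage isOpen_ball)
  have hpO : ι p ∈ O := hOψ.ge ⟨mem_chart_source F p, mem_ball_self hδ⟩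
  obtain ⟨ε, hε, hεO⟩ := isOpen_iff.1 (hO.inter isOpen_ball) _ ⟨hpO, mem_ball_self hr⟩
  obtain ⟨a, haε, haU⟩ := mem_closure_iff.1 hp _ isOpen_ball (mem_ball_self hε)
  filter_upwards [hι.continuous.continuousAt.preimage_mem_nhds (ball_mem_nhds (ι p) hε)] with q hq
  have hεψ : ι ⁻¹' ball (ι p) ε ⊆ ψ.source ∩ ψ ⁻¹' ball (ψ p) δ :=
    fun m hm => hOψ.le (hεO hm).1
  have hqδ : dist (ψ q) (ψ p) < δ := (hεψ hq).2
  refine closure_mono inter_subset_left (mem_closure_of_isEmbedding_of_convex hι hV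
    (isBounded_ball.subset inter_subset_right) (hιU.mono_right inter_subset_left) isOpen_ball hfrV
    (mul_pos two_pos hδ)
    ((closedBall_subset_closedBall' (by linarith)).trans hδr) (convex_ball (ι p) ε)
    (fun x hx => (hεO hx).2)
    (hεψ.trans (inter_subset_inter_right _ (preimage_mono (ball_subset_ball' ?_)))) hq
    ⟨a, haε, haU, (hεO haε).2⟩)
  rw [dist_comm]
  linarith

variable (E) in
theorem eventually_mem_closure_of_frontier_subset_range (F : Type*) [NormedAddCommGroup F]
    [NormedSpace ℝ F] [FiniteDimensional ℝ F] [ChartedSpace F M] {X : Type*} [TopologicalSpace X]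
    [ChartedSpace E X] {ι : M → X} (hι : IsEmbedding ι) {U : Set X} (hU : IsOpen U)
    (hιU : Disjoint (range ι) U) (hfr : frontier U ⊆ range ι) {p : M} (hp : ι p ∈ closure U) :
    ∀ᶠ q in 𝓝 p, ι q ∈ closure U := by
  set φ := chartAt E (ι p)
  let W : TopologicalSpace.Opens M := ⟨ι ⁻¹' φ.source, φ.open_source.preimage hι.continuous⟩
  have hpW : p ∈ W := mem_chart_source E (ι p)
  have hκ : IsEmbedding fun w : W => φ (ι w) :=
    φ.isEmbedding_restrict.comp (hι.restrictPreimage φ.source)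
  have hκU : Disjoint (range fun w : W => φ (ι w)) (φ.symm ⁻¹' U) := by
    refine disjoint_left.2 ?_
    rintro _ ⟨w, rfl⟩ hw
    rw [mem_preimage, φ.left_inv w.2] at hw
    exact disjoint_left.1 hιU (mem_range_self _) hw
  have hκ_closure (w : W) : φ (ι w) ∈ closure (φ.symm ⁻¹' U) ↔ ι w ∈ closure U := by
    have h := congrArg (φ (ι w) ∈ ·) (φ.symm.preimage_closure U)
    simpa [φ.map_source w.2, φ.left_inv w.2] using h.symm
  have hκfr : frontier (φ.symm ⁻¹' U) ∩ φ.target ⊆ range fun w : W => φ (ι w) := by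
    rintro x ⟨hxU, hxt⟩
    obtain ⟨m, hm⟩ := hfr ((φ.symm.preimage_frontier U).ge ⟨hxt, hxU⟩).2
    have hmφ : ι m ∈ φ.source := hm ▸ φ.map_target hxt
    exact ⟨⟨m, hmφ⟩, by simp only [hm, φ.right_inv hxt]⟩
  have hκUφ : IsOpen (φ.symm ⁻¹' U ∩ φ.target) :=
    inter_comm φ.target _ ▸ φ.symm.isOpen_inter_preimage hU
  have hev := eventually_mem_closure_of_isEmbedding F hκ φ.open_target hκUφ hκU hκfr
    (p := ⟨p, hpW⟩) (φ.map_source hpW) ((hκ_closure ⟨p, hpW⟩).2 hp)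
  exact (W.isOpenEmbedding'.map_nhds_eq ⟨p, hpW⟩).ge (hev.mono fun w hw => (hκ_closure w).1 hw)

variable (E) in
theorem forall_mem_closure_of_frontier_subset_range (F : Type*) [NormedAddCommGroup F]
    [NormedSpace ℝ F] [FiniteDimensional ℝ F] [ChartedSpace F M] [PreconnectedSpace M]
    {X : Type*} [TopologicalSpace X] [ChartedSpace E X] {ι : M → X} (hι : IsEmbedding ι) {U : Set X}
    (hU : IsOpen U) (hιU : Disjoint (range ι) U) (hfr : frontier U ⊆ range ι)
    (hne : (frontier U).Nonempty) (m : M) : ι m ∈ closure U := by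
  have hclosed : IsClosed (ι ⁻¹' closure U) := isClosed_closure.preimage hι.continuous
  have hopen : IsOpen (ι ⁻¹' closure U) := isOpen_iff_mem_nhds.2 fun _ hp =>
    eventually_mem_closure_of_frontier_subset_range E F hι hU hιU hfr hp
  obtain ⟨x, hx⟩ := hne
  obtain ⟨m₀, rfl⟩ := hfr hx
  exact (IsClopen.eq_univ ⟨hclosed, hopen⟩ ⟨m₀, frontier_subset_closure hx⟩).ge (mem_univ m)

end Frontier

theorem IsSimanifold.le_of_subset {N i j : ℕ} {S X : Set (Euc N)} (hS : IsSimanifold i S)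
    (hX : IsSimanifold j X) (h : S ⊆ X) : i ≤ j := by
  obtain ⟨hSne, -, ⟨_⟩⟩ := hS
  obtain ⟨-, -, ⟨_⟩⟩ := hX
  have := hSne.to_subtype
  simpa using finrank_le_of_continuous_injective (E := Euc i) (F := Euc j)
    (continuous_inclusion h) (inclusion_injective h)

theorem IsSimanifold.le_of_isOpen {N i j : ℕ} {S X : Set (Euc N)} (hS : IsSimanifold i (S ∩ X))
    (hX : IsSimanifold j X) (ho : IsOpen (Subtype.val ⁻¹' S : Set X)) : j ≤ i := by
  obtain ⟨⟨x, hxS, hxX⟩, -, ⟨_⟩⟩ := hS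
  obtain ⟨-, -, ⟨_⟩⟩ := hX
  let O : TopologicalSpace.Opens X := ⟨_, ho⟩
  have : Nonempty O := ⟨⟨⟨x, hxX⟩, hxS⟩⟩
  have hf : Continuous fun y : O => (⟨y, y.2, y.1.2⟩ : ↥(S ∩ X)) := by fun_prop
  simpa using finrank_le_of_continuous_injective (E := Euc j) (F := Euc i) hf
    fun y z hyz => Subtype.ext (Subtype.ext (Subtype.mk.inj hyz))

attribute [ext] Dehyperplane

namespace Dehyperplane

variable {N n m k : ℕ} {T X : Set (Euc N)} (P : Dehyperplane N n T)

/-- The same dehyperplane with its two sides exchanged. -/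
def swap : Dehyperplane N n T where
  P := P.P
  plus := P.minus
  minus := P.plus
  simP := P.simP
  simPlus := P.simMinus
  simMinus := P.simPlus
  union_eq := by rw [union_assoc, union_comm, union_comm P.P, P.union_eq]
  disj_pP := P.disj_Pm.symm
  disj_pm := P.disj_pm.symm
  disj_Pm := P.disj_pP.symm
  closure_eq := by rw [inter_comm, P.closure_eq]

theorem isClosed : IsClosed P.P :=
  P.closure_eq ▸ isClosed_closure.inter isClosed_closure

theorem subset : P.P ⊆ T :=
  (subset_union_right.trans subset_union_left).trans P.union_eq.le

theorem disjoint_closure_plus_minus : Disjoint (closure P.plus) P.minus :=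
  disjoint_left.2 fun _ hp hm =>
    disjoint_left.1 P.disj_Pm (P.closure_eq ▸ ⟨hp, subset_closure hm⟩) hm

theorem isOpen_preimage_plus (hXT : X ⊆ T) : IsOpen (Subtype.val ⁻¹' P.plus : Set X) := by
  have h : (Subtype.val ⁻¹' P.plus : Set X) = Subtype.val ⁻¹' (closure P.minus)ᶜ := by
    ext ⟨x, hx⟩
    refine ⟨fun hp hm => disjoint_left.1 P.swap.disjoint_closure_plus_minus hm hp, fun hm => ?_⟩
    obtain (hp | h0) | hm' := P.union_eq.ge (hXT hx)
    · exact hp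
    · exact absurd (P.closure_eq.ge h0).2 hm
    · exact absurd (subset_closure hm') hm
  exact h ▸ isClosed_closure.isOpen_compl.preimage continuous_subtype_val

theorem frontier_preimage_plus_subset (hXT : X ⊆ T) :
    frontier (Subtype.val ⁻¹' P.plus : Set X) ⊆ Subtype.val ⁻¹' P.P := by
  rw [(P.isOpen_preimage_plus hXT).frontier_eq]
  rintro ⟨x, hx⟩ ⟨hcl, hp⟩
  obtain (hp' | h0) | hm := P.union_eq.ge (hXT hx)
  · exact absurd hp' hp
  · exact h0
  · exact absurd hm (disjoint_left.1 P.disjoint_closure_plus_minus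
      (continuous_subtype_val.closure_preimage_subset _ hcl))

theorem inter_subset_closure_plus_inter (hXT : X ⊆ T) (hX : IsSimanifold m X)
    (hPX : IsSimanifold k (P.P ∩ X)) (hne : (P.plus ∩ X).Nonempty) :
    P.P ∩ X ⊆ closure (P.plus ∩ X) := by
  obtain ⟨-, _, ⟨_⟩⟩ := hX
  obtain ⟨⟨p, hpP, hpX⟩, _, ⟨_⟩⟩ := hPX
  obtain ⟨y, hyp, hyX⟩ := hne
  have hfrontier : (frontier (Subtype.val ⁻¹' P.plus : Set X)).Nonempty :=
    nonempty_frontier_iff.2 ⟨⟨⟨y, hyX⟩, hyp⟩, fun h =>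
      disjoint_left.1 P.disj_pP (h.ge (mem_univ ⟨p, hpX⟩)) hpP⟩
  intro x hx
  have hx_closure := forall_mem_closure_of_frontier_subset_range (Euc m) (Euc k)
    (IsEmbedding.inclusion (inter_subset_right : P.P ∩ X ⊆ X)) (P.isOpen_preimage_plus hXT)
    (disjoint_left.2 fun _ ⟨z, hz⟩ hp => disjoint_left.1 P.disj_pP hp (hz ▸ z.2.1))
    (fun z hz => ⟨⟨z, P.frontier_preimage_plus_subset hXT hz, z.2⟩, rfl⟩) hfrontier ⟨x, hx⟩
  rwa [closure_subtype, Subtype.image_preimage_coe, inter_comm] at hx_closure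

/-- The dehyperplane cut out on a subsimanifold `X` that is closed in `T`. -/
def inter (hX : IsSimanifold m X) (hXT : T ∩ closure X = X) (h0 : IsSimanifold (m - 1) (P.P ∩ X))
    (hplus : IsSimanifold m (P.plus ∩ X)) (hminus : IsSimanifold m (P.minus ∩ X)) :
    Dehyperplane N m X where
  P := P.P ∩ X
  plus := P.plus ∩ X
  minus := P.minus ∩ X
  simP := h0
  simPlus := hplus
  simMinus := hminus
  union_eq := by
    rw [← union_inter_distrib_right, ← union_inter_distrib_right, P.union_eq, ← hXT,
      inter_eq_right]
    exact inter_subset_left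
  disj_pP := P.disj_pP.mono inter_subset_left inter_subset_left
  disj_pm := P.disj_pm.mono inter_subset_left inter_subset_left
  disj_Pm := P.disj_Pm.mono inter_subset_left inter_subset_left
  closure_eq := by
    have hX' : X ⊆ T := hXT ▸ inter_subset_left
    refine subset_antisymm (fun x hx => ?_) (subset_inter
      (P.inter_subset_closure_plus_inter hX' hX h0 hplus.1)
      (P.swap.inter_subset_closure_plus_inter hX' hX h0 hminus.1))
    have hxP : x ∈ P.P := P.closure_eq ▸ inter_subset_inter (closure_mono inter_subset_left)
      (closure_mono inter_subset_left) hx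
    exact ⟨hxP, hXT ▸ ⟨P.subset hxP, closure_mono inter_subset_right hx.1⟩⟩

end Dehyperplane

section Restriction

variable {N n m : ℕ} {T X Y : Set (Euc N)} {A : Set (Dehyperplane N n T)}

theorem subset_of_mem_flats (hX : X ∈ flats A) : X ⊆ T := by
  obtain ⟨-, B, -, rfl⟩ := hX
  exact inter_subset_left

theorem inter_closure_of_mem_flats (hX : X ∈ flats A) : T ∩ closure X = X := by
  refine subset_antisymm ?_ (subset_inter (subset_of_mem_flats hX) subset_closure)
  obtain ⟨-, B, -, rfl⟩ := hX
  exact inter_subset_inter_right _ (closure_minimal inter_subset_right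
    (isClosed_biInter fun P _ => P.isClosed))

theorem finite_restrict (hA : A.Finite) (m : ℕ) (X : Set (Euc N)) : (restrict A m X).Finite := by
  have hsub (P : Dehyperplane N n T) : {Q : Dehyperplane N m X | Q.P = P.P ∩ X ∧
      Q.plus = P.plus ∩ X ∧ Q.minus = P.minus ∩ X}.Subsingleton :=
    fun Q ⟨h0, hp, hm⟩ Q' ⟨h0', hp', hm'⟩ =>
      Dehyperplane.ext (h0.trans h0'.symm) (hp.trans hp'.symm) (hm.trans hm'.symm)
  refine (hA.biUnion fun P _ => (hsub P).finite).subset ?_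
  rintro Q ⟨P, hP, -, -, hQ⟩
  exact mem_biUnion hP hQ

theorem flats_restrict_subset (hX : X ∈ flats A) : flats (restrict A m X) ⊆ flats A := by
  rintro Y ⟨hY, C, hC, rfl⟩
  obtain ⟨-, B, hB, hXB⟩ := hX
  have hmemX (x : Euc N) : x ∈ X ↔ x ∈ T ∧ ∀ P ∈ B, x ∈ P.P := by
    simp only [hXB, mem_inter_iff, mem_iInter]
  refine ⟨hY, B ∪ {P ∈ A | ∃ Q ∈ C, Q.P = P.P ∩ X}, union_subset hB (sep_subset _ _), ?_⟩
  ext x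
  simp only [mem_inter_iff, mem_iInter]
  constructor
  · rintro ⟨hx, hxC⟩
    refine ⟨((hmemX x).1 hx).1, ?_⟩
    rintro P (hP | ⟨-, Q, hQ, hQP⟩)
    · exact ((hmemX x).1 hx).2 P hP
    · exact (hQP ▸ hxC Q hQ).1
  · rintro ⟨hxT, hxP⟩
    have hxX : x ∈ X := (hmemX x).2 ⟨hxT, fun P hP => hxP P (Or.inl hP)⟩
    refine ⟨hxX, fun Q hQ => ?_⟩
    obtain ⟨P, hP, -, -, hQP, -⟩ := hC hQ
    exact hQP ▸ ⟨hxP P (Or.inr ⟨hP, Q, hQ, hQP⟩), hxX⟩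

theorem exists_mem_restrict (hA : IsDA n T A) (hX : X ∈ flats A) (hXm : IsSimanifold m X)
    {P : Dehyperplane N n T} (hP : P ∈ A) (hXP : ¬ X ⊆ P.P) (hne : (P.P ∩ X).Nonempty) :
    ∃ Q ∈ restrict A m X, Q.P = P.P ∩ X := by
  obtain ⟨i, -, -, h0, hplus, hminus⟩ := (hA.2 P hP X hX hne).resolve_left hXP
  obtain rfl : i = m := le_antisymm (hplus.le_of_subset hXm inter_subset_right)
    (hplus.le_of_isOpen hXm (P.isOpen_preimage_plus (subset_of_mem_flats hX)))
  exact ⟨P.inter hXm (inter_closure_of_mem_flats hX) h0 hplus hminus,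
    ⟨P, hP, hXP, hne, rfl, rfl, rfl⟩, rfl⟩

theorem restriction_isDA_general (hA : IsDA n T A) (hX : X ∈ flats A) (hXm : IsSimanifold m X) :
    IsDA m X (restrict A m X) ∧
      ∀ P ∈ A, ¬ X ⊆ P.P → (P.P ∩ X).Nonempty →
        ∃ Q ∈ restrict A m X, Q.P = P.P ∩ X := by
  refine ⟨⟨finite_restrict hA.1 m X, ?_⟩, fun P => exists_mem_restrict hA hX hXm⟩
  rintro Q ⟨P, hP, -, -, hQ0, hQplus, hQminus⟩ Y hY hne
  have hYX : Y ⊆ X := subset_of_mem_flats hY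
  have htrace (S : Set (Euc N)) : S ∩ X ∩ Y = S ∩ Y := by
    rw [inter_assoc, inter_eq_right.2 hYX]
  simp only [hQ0, hQplus, hQminus, htrace] at hne ⊢
  refine (hA.2 P hP Y (flats_restrict_subset hX hY) hne).imp (subset_inter · hYX) ?_
  rintro ⟨i, hi, -, h0, hplus, hminus⟩
  exact ⟨i, hi, hplus.le_of_subset hXm (inter_subset_right.trans hYX), h0, hplus, hminus⟩

end Restriction

/-- the restriction `A^X` of a DA `A` to a flat `X` (an `m`-simanifold)
is a DA in `X`, and it consists exactly of the sets `P ∩ X` with `P ∈ A`, `X ⊄ P`,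
`P ∩ X ≠ ∅`. -/
theorem restriction_isDA {N n : ℕ} (hn : 1 ≤ n) {T : Set (Euc N)}
    (hT : IsSimanifold n T) (A : Set (Dehyperplane N n T)) (hA : IsDA n T A)
    {X : Set (Euc N)} (hX : X ∈ flats A) {m : ℕ} (hXm : IsSimanifold m X) :
    IsDA m X (restrict A m X) ∧
      ∀ P ∈ A, ¬ X ⊆ P.P → (P.P ∩ X).Nonempty →
        ∃ Q ∈ restrict A m X, Q.P = P.P ∩ X := restriction_isDA_general hA hX hXm
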